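/- Proposition 4 (DD-SEP is contained in D-SEP): Let 𝕄 be a partial mixed graph with distinct vertices X and Y, and let M be a completion of 𝕄 such that D-SEP(X,Y,M_X̃) ∩ De(X,M) = ∅ (the graphical condition for the existence of an adjustment set relative to (X,Y) in M). Then every vertex V ∈ DD-SEP(X,Y,𝕄_X̃) satisfies V ∈ D-SEP(X,Y,M_X̃). -/

import Mathlib

/-- Marks at edge ends in a partial mixed graph. -/
inductive Mark : Type
  | tail
  | arrow
  | circle
deriving DecidableEq

/-- A partial mixed graph (PMG): a symmetric irreflexive adjacency relation together
with, for each ordered pair `(a, b)` of adjacent vertices, a mark `mark a b` at `b` on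
the edge `a–b`, such that no edge has tails at both endpoints. -/
structure PMG (V : Type) where
  adj : V → V → Prop
  symm : ∀ a b, adj a b → adj b a
  irrefl : ∀ a, ¬ adj a a
  mark : V → V → Mark
  noDoubleTail : ∀ a b, adj a b → ¬ (mark a b = Mark.tail ∧ mark b a = Mark.tail)

namespace PMG

variable {V : Type}

/-- `a → b`: adjacent, tail at `a`, arrowhead at `b`. -/
def dir (G : PMG V) (a b : V) : Prop :=
  G.adj a b ∧ G.mark b a = Mark.tail ∧ G.mark a b = Mark.arrow

/-- `a ↔ b`: adjacent, arrowheads at both endpoints. -/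
def bidir (G : PMG V) (a b : V) : Prop :=
  G.adj a b ∧ G.mark b a = Mark.arrow ∧ G.mark a b = Mark.arrow

/-- `a` is an ancestor of `b`: `a = b` or there is a directed path from `a` to `b`. -/
def Anc (G : PMG V) (a b : V) : Prop :=
  Relation.ReflTransGen G.dir a b

/-- `a` is an ancestor of some vertex of the set `S`. -/
def AncSet (G : PMG V) (a : V) (S : Set V) : Prop :=
  ∃ v ∈ S, G.Anc a v

/-- A mixed graph: a PMG with no circle marks. -/
def IsMixed (G : PMG V) : Prop :=
  ∀ a b, G.adj a b → G.mark a b ≠ Mark.circle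

/-- Ancestral: no directed cycles and no almost directed cycles. -/
def Ancestral (G : PMG V) : Prop :=
  ∀ a b, G.Anc a b → a ≠ b → ¬ G.dir b a ∧ ¬ G.bidir a b

/-- Unshielded collider `(a, b, c)`: `a, c` both adjacent to `b`, `a` and `c`
distinct and nonadjacent, arrowheads at `b` on both edges. -/
def UnshieldedCollider (G : PMG V) (a b c : V) : Prop :=
  a ≠ c ∧ G.adj a b ∧ G.adj c b ∧ ¬ G.adj a c ∧
    G.mark a b = Mark.arrow ∧ G.mark c b = Mark.arrow

/-- `M` is a completion of the PMG `H`: same vertices and adjacencies, all non-circle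
marks of `H` occur identically in `M`, `M` is an ancestral mixed graph, and every
unshielded collider of `M` is already an unshielded collider of `H`. -/
def Completion (H M : PMG V) : Prop :=
  (∀ a b, M.adj a b ↔ H.adj a b) ∧
  (∀ a b, H.adj a b → H.mark a b ≠ Mark.circle → M.mark a b = H.mark a b) ∧
  M.IsMixed ∧ M.Ancestral ∧
  (∀ a b c, M.UnshieldedCollider a b c → H.UnshieldedCollider a b c)

/-- An edge usable in a possible directed path from `a` to `b`:
adjacent, no arrowhead at `a`, no tail at `b`. -/
def possEdge (G : PMG V) (a b : V) : Prop :=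
  G.adj a b ∧ G.mark b a ≠ Mark.arrow ∧ G.mark a b ≠ Mark.tail

/-- A circle edge: adjacent with circle marks at both endpoints. -/
def circleEdge (G : PMG V) (a b : V) : Prop :=
  G.adj a b ∧ G.mark a b = Mark.circle ∧ G.mark b a = Mark.circle

/-- `p 0, …, p n` is a path: distinct vertices, consecutive ones adjacent. -/
def IsPathOn (G : PMG V) (p : ℕ → V) (n : ℕ) : Prop :=
  (∀ i ≤ n, ∀ j ≤ n, p i = p j → i = j) ∧ ∀ i < n, G.adj (p i) (p (i+1))

/-- `p 0, …, p n` is a possible directed path. -/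
def IsPossDirPathOn (G : PMG V) (p : ℕ → V) (n : ℕ) : Prop :=
  (∀ i ≤ n, ∀ j ≤ n, p i = p j → i = j) ∧ ∀ i < n, G.possEdge (p i) (p (i+1))

/-- `p 0, …, p n` is a circle path. -/
def IsCirclePathOn (G : PMG V) (p : ℕ → V) (n : ℕ) : Prop :=
  (∀ i ≤ n, ∀ j ≤ n, p i = p j → i = j) ∧ ∀ i < n, G.circleEdge (p i) (p (i+1))

/-- The path `p 0, …, p n` is uncovered: any two nonconsecutive neighbours of an
internal vertex are nonadjacent. -/
def UncoveredOn (G : PMG V) (p : ℕ → V) (n : ℕ) : Prop :=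
  ∀ i, i + 2 ≤ n → ¬ G.adj (p i) (p (i+2))

/-- `F_x` relative to `V'`: the vertices of `V'` adjacent to `x` whose edge carries
a circle or an arrowhead at `x`. -/
def Fset (G : PMG V) (V' : Set V) (x : V) : Set V :=
  {v | v ∈ V' ∧ G.adj v x ∧ (G.mark v x = Mark.circle ∨ G.mark v x = Mark.arrow)}

/-- `p 0, …, p n` is an unbridged path relative to `V'` in `G`: an uncovered circle
path with at least one edge, lying in `G[−V']`, with
`F_{p 0} \ F_{p 1} ≠ ∅` and `F_{p n} \ F_{p (n-1)} ≠ ∅`. -/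
def UnbridgedOn (G : PMG V) (V' : Set V) (p : ℕ → V) (n : ℕ) : Prop :=
  1 ≤ n ∧ G.IsCirclePathOn p n ∧ G.UncoveredOn p n ∧
  (∀ i ≤ n, p i ∉ V') ∧
  (G.Fset V' (p 0) \ G.Fset V' (p 1)).Nonempty ∧
  (G.Fset V' (p n) \ G.Fset V' (p (n-1))).Nonempty

/-- The set `S_A`: `A` together with all vertices adjacent to `A` whose edge has an
arrowhead at `A`. -/
def SA (G : PMG V) (A : V) : Set V :=
  {A} ∪ {v | G.adj v A ∧ G.mark v A = Mark.arrow}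

end PMG

namespace PMG

/-- `G_X̃`: the graph `G` with all edges out of `X` (edges `X → v`) removed. -/
def delOut {V : Type} (G : PMG V) (X : V) : PMG V where
  adj a b := G.adj a b ∧ ¬ (a = X ∧ G.dir X b) ∧ ¬ (b = X ∧ G.dir X a)
  symm := fun a b h => ⟨G.symm a b h.1, h.2.2, h.2.1⟩
  irrefl := fun a h => G.irrefl a h.1
  mark := G.mark
  noDoubleTail := fun a b h => G.noDoubleTail a b h.1

/-- `D-SEP(X, Y, G)`: vertices `v ≠ X` joined to `X` by a collider path all of
whose vertices are ancestors of `X` or of `Y` in `G`. -/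
def DSEP {V : Type} (G : PMG V) (X Y : V) : Set V :=
  {v | v ≠ X ∧ ∃ (p : ℕ → V) (n : ℕ), 1 ≤ n ∧ G.IsPathOn p n ∧
    p 0 = X ∧ p n = v ∧
    (∀ i, 1 ≤ i → i < n →
      G.mark (p (i-1)) (p i) = Mark.arrow ∧ G.mark (p (i+1)) (p i) = Mark.arrow) ∧
    (∀ i ≤ n, G.Anc (p i) X ∨ G.Anc (p i) Y)}

/-- `Q_v`: the vertices `v'` that are ancestors of `Y` in `G`, adjacent to `v`,
with a circle at `v` on the edge `v–v'`. -/
def QV {V : Type} (G : PMG V) (Y v : V) : Set V :=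
  {v' | G.Anc v' Y ∧ G.adj v v' ∧ G.mark v' v = Mark.circle}

/-- `DD-SEP(X, Y, 𝕄_X̃)`, defined inductively: `v` belongs to it iff there is a
path `X ↔ p 1 ↔ ⋯ ↔ p (k-1) ◂ v` in `𝕄_X̃` whose internal edges are bidirected
and whose last edge has an arrowhead at `p (k-1)`, where `Y` is a possible
descendant of `X` in `𝕄`, all internal vertices already belong to `DD-SEP`, and
`v` is an ancestor of `Y` in `𝕄` or `𝕄[Q_v]` is not complete. -/
inductive DDSEP {V : Type} (G : PMG V) (X Y : V) : V → Prop
  | intro (v : V) (p : ℕ → V) (k : ℕ) (hk : 1 ≤ k)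
      (hinj : ∀ i ≤ k, ∀ j ≤ k, p i = p j → i = j)
      (h0 : p 0 = X) (hkv : p k = v)
      (hbi : ∀ i, i + 1 < k → (G.delOut X).bidir (p i) (p (i+1)))
      (hlastadj : (G.delOut X).adj (p (k-1)) (p k))
      (hlast : (G.delOut X).mark (p k) (p (k-1)) = Mark.arrow)
      (hmid : ∀ i, 1 ≤ i → i < k → DDSEP G X Y (p i))
      (hY : Relation.ReflTransGen G.possEdge X Y)
      (hv : G.Anc v Y ∨ ∃ a ∈ G.QV Y v, ∃ b ∈ G.QV Y v, a ≠ b ∧ ¬ G.adj a b) :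
      DDSEP G X Y v

end PMG

theorem PMG.anc_delOut {V : Type} (M : PMG V) (X Y v : V) (h : M.Anc v Y) :
    (M.delOut X).Anc v X ∨ (M.delOut X).Anc v Y := by
  unfold PMG.Anc at h
  induction h using Relation.ReflTransGen.head_induction_on with
  | refl => exact Or.inr Relation.ReflTransGen.refl
  | @head a c hac _ ih =>
    by_cases ha : a = X
    · subst ha
      exact Or.inl Relation.ReflTransGen.refl
    · have hd : (M.delOut X).dir a c := by
        refine ⟨⟨hac.1, fun h => ha h.1, ?_⟩, hac.2.1, hac.2.2⟩
        rintro ⟨rfl, h⟩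
        have h1 := hac.2.1
        have h2 := h.2.2
        rw [h1] at h2
        cases h2
      rcases ih with ih | ih
      · exact Or.inl (Relation.ReflTransGen.head hd ih)
      · exact Or.inr (Relation.ReflTransGen.head hd ih)

theorem PMG.dir_of_tail {V : Type} (M : PMG V) (hm : M.IsMixed) {a v : V}
    (hadj : M.adj v a) (h : M.mark a v = Mark.tail) : M.dir v a := by
  refine ⟨hadj, h, ?_⟩
  have h1 := hm v a hadj
  have h2 := M.noDoubleTail v a hadj
  cases h3 : M.mark v a
  · exact absurd ⟨h3, h⟩ h2
  · rfl
  · exact absurd h3 h1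

theorem PMG.anc_completion {V : Type} {H M : PMG V} (hHM : PMG.Completion H M)
    {a b : V} (h : H.Anc a b) : M.Anc a b := by
  refine Relation.ReflTransGen.mono ?_ _ _ h
  rintro a b ⟨h1, h2, h3⟩
  refine ⟨(hHM.1 a b).2 h1, ?_, ?_⟩
  · rw [hHM.2.1 b a (H.symm _ _ h1) (by rw [h2]; decide), h2]
  · rw [hHM.2.1 a b h1 (by rw [h3]; decide), h3]

/-- **Proposition 4 (DD-SEP ⊆ D-SEP).** Let `M` be a completion of the PMG `𝕄`
with `D-SEP(X, Y, M_X̃) ∩ De(X, M) = ∅`. Then every vertex of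
`DD-SEP(X, Y, 𝕄_X̃)` belongs to `D-SEP(X, Y, M_X̃)`. -/
theorem DDSEP_subset_DSEP {V : Type} (H M : PMG V) (hHM : PMG.Completion H M)
    (X Y : V) (hXY : X ≠ Y)
    (hdisj : ∀ v ∈ PMG.DSEP (M.delOut X) X Y, ¬ M.Anc X v) :
    ∀ v, PMG.DDSEP H X Y v → v ∈ PMG.DSEP (M.delOut X) X Y := by
  have hHM' := hHM
  obtain ⟨hadj, hmark, hmix, -, huc⟩ := hHM'
  intro v hv
  have harr : ∀ a b, H.adj a b → H.mark a b = Mark.arrow → M.mark a b = Mark.arrow := by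
    intro a b h1 h2
    rw [hmark a b h1 (by rw [h2]; decide), h2]
  induction hv with
  | intro v p k hk hinj h0 hkv hbi hlastadj hlast hmid hY hv ih =>
    have hancM : M.Anc v Y := by
      rcases hv with hv | ⟨a, ⟨ha1, ha2, ha3⟩, b, ⟨hb1, hb2, hb3⟩, hab, hnab⟩
      · exact PMG.anc_completion hHM hv
      · have hMa := (hadj v a).2 ha2
        have hMb := (hadj v b).2 hb2
        have ca := hmix a v (M.symm _ _ hMa)
        have cb := hmix b v (M.symm _ _ hMb)
        cases h3 : M.mark a v
        · exact Relation.ReflTransGen.head (PMG.dir_of_tail M hmix hMa h3)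
            (PMG.anc_completion hHM ha1)
        · cases h4 : M.mark b v
          · exact Relation.ReflTransGen.head (PMG.dir_of_tail M hmix hMb h4)
              (PMG.anc_completion hHM hb1)
          · have := huc a v b ⟨hab, M.symm _ _ hMa, M.symm _ _ hMb,
              fun h => hnab ((hadj a b).1 h), h3, h4⟩
            have h5 := this.2.2.2.2.1
            rw [ha3] at h5
            cases h5
          · exact absurd h4 cb
        · exact absurd h3 ca
    have hadjH : ∀ i, i < k → H.adj (p i) (p (i+1)) := by
      intro i hi
      rcases Nat.lt_or_ge (i+1) k with h | h
      · exact (hbi i h).1.1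
      · obtain rfl : k = i + 1 := by omega
        exact hlastadj.1
    have hback : ∀ i, i < k → M.mark (p (i+1)) (p i) = Mark.arrow := by
      intro i hi
      refine harr _ _ (H.symm _ _ (hadjH i hi)) ?_
      rcases Nat.lt_or_ge (i+1) k with h | h
      · exact (hbi i h).2.1
      · obtain rfl : k = i + 1 := by omega
        exact hlast
    refine ⟨?_, p, k, hk, ⟨hinj, ?_⟩, h0, hkv, ?_, ?_⟩
    · intro h
      have := hinj k le_rfl 0 (Nat.zero_le _) (by rw [hkv, h0, h])
      omega
    · intro i hi
      refine ⟨(hadj _ _).2 (hadjH i hi), ?_, ?_⟩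
      · rintro ⟨h1, h2⟩
        have h3 := h2.2.1
        rw [← h1, hback i hi] at h3
        cases h3
      · rintro ⟨h1, -⟩
        have := hinj (i+1) hi 0 (Nat.zero_le _) (by rw [h1, h0])
        omega
    · intro i h1 hi
      refine ⟨?_, hback i hi⟩
      obtain ⟨j, rfl⟩ : ∃ j, i = j + 1 := ⟨i - 1, by omega⟩
      exact harr _ _ (hadjH j (by omega)) (hbi j hi).2.2
    · intro i hi
      rcases Nat.eq_zero_or_pos i with h | h
      · subst h
        rw [h0]
        exact Or.inl Relation.ReflTransGen.refl
      · rcases Nat.lt_or_ge i k with h' | h'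
        · obtain ⟨-, q, n, -, -, -, hq, -, hA⟩ := ih i h h'
          have := hA n le_rfl
          rwa [hq] at this
        · obtain rfl : i = k := by omega
          rw [hkv]
          exact PMG.anc_delOut M X Y v hancM
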